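/- Fix 0 < α ≤ 2, T > 0, and an integer j ≥ 0. Let g : (0,T) → ℂ be measurable with ∫_0^T |g(τ)|² τ^α dτ < ∞, and for 0 < t < T set v(·,t) := L_t^α g (using the restriction of g to (0,t)). Then for every fixed ξ > 0, lim_{t→0⁺} t^α · |∂_ξ^j ( v(ξ,t) · ξ^{-(α-1)(α+2)/(2α)} · exp((α²/(4t)) ξ^{2/α}) )|² = 0, where ∂_ξ^j denotes the j-th derivative in ξ at fixed t. -/

import Mathlib

open MeasureTheory Filter Set

/-- The kernel `K_α(x,s) = (α^α/(2^α Γ(α/2))) x s^{-(α/2+1)} exp(-α² x^{2/α}/(4s))`. -/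
noncomputable def Kker (α x s : ℝ) : ℝ :=
  (α ^ α / (2 ^ α * Real.Gamma (α / 2))) * x * s ^ (-(α / 2 + 1)) *
    Real.exp (-(α ^ 2) * x ^ (2 / α) / (4 * s))

/-- The transform `(L_t^α g)(x) = t^{-α} ∫_0^t K_α(x,t-τ) g(τ) τ^α dτ`. -/
noncomputable def Lt (α t : ℝ) (g : ℝ → ℂ) (x : ℝ) : ℂ :=
  ((t ^ (-α) : ℝ) : ℂ) *
    ∫ τ in Set.Ioo (0 : ℝ) t, (Kker α x (t - τ) : ℂ) * g τ * ((τ ^ α : ℝ) : ℂ)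


/-- the change of variables -/
noncomputable def wv (t τ : ℝ) : ℝ := (t - τ)⁻¹ - t⁻¹

lemma wv_pos {t τ : ℝ} (h : τ ∈ Ioo 0 t) : 0 < wv t τ := by
  unfold wv
  have h1 := h.1
  have h2 := h.2
  have : t⁻¹ < (t - τ)⁻¹ := by
    apply inv_strictAnti₀ <;> linarith
  linarith

lemma wv_eq {t τ : ℝ} (h : τ ∈ Ioo 0 t) : t * wv t τ = τ / (t - τ) := by
  unfold wv
  have h1 := h.1
  have h2 := h.2
  have h3 : t - τ ≠ 0 := by linarith
  have h4 : t ≠ 0 := by linarith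
  field_simp
  ring

lemma wv_meas (t : ℝ) : Measurable (wv t) := by
  unfold wv; fun_prop

lemma Iw (α c : ℝ) (hα : 0 < α) (hc : 0 < c) :
    IntegrableOn (fun w : ℝ => w ^ α * Real.exp (-c * w)) (Ioi 0) := by
  have := integrableOn_rpow_mul_exp_neg_mul_rpow (p := 1) (s := α) (b := c) (by linarith) one_pos hc
  simpa using this

lemma cov (α c t : ℝ) (hα : 0 < α) (hc : 0 < c) :
    IntegrableOn (fun τ => |((t - τ) ^ 2)⁻¹| • ((wv t τ) ^ α * Real.exp (-c * wv t τ))) (Ioo 0 t) ∧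
    ∫ τ in Ioo 0 t, |((t - τ) ^ 2)⁻¹| • ((wv t τ) ^ α * Real.exp (-c * wv t τ)) ≤
      ∫ w in Ioi 0, w ^ α * Real.exp (-c * w) := by
  have hd : ∀ x ∈ Ioo 0 t, HasDerivWithinAt (wv t) (((t - x) ^ 2)⁻¹) (Ioo 0 t) x := by
    intro x hx
    apply HasDerivAt.hasDerivWithinAt
    have h3 : t - x ≠ 0 := by have := hx.2; linarith
    have := (((hasDerivAt_id x).const_sub t).inv h3).sub_const t⁻¹
    refine HasDerivAt.congr_deriv (f := wv t) this ?_
    simp [id]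
  have hi : InjOn (wv t) (Ioo 0 t) := by
    intro x hx y hy h
    simp only [wv, sub_left_inj, inv_inj] at h
    linarith
  have hsub : wv t '' Ioo 0 t ⊆ Ioi 0 := by
    rintro _ ⟨x, hx, rfl⟩
    exact wv_pos hx
  have hI := Iw α c hα hc
  constructor
  · exact (integrableOn_image_iff_integrableOn_abs_deriv_smul measurableSet_Ioo hd hi
      (fun w : ℝ => w ^ α * Real.exp (-c * w))).1 (hI.mono_set hsub)
  · rw [← integral_image_eq_integral_abs_deriv_smul measurableSet_Ioo hd hi
      (fun w : ℝ => w ^ α * Real.exp (-c * w))]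
    apply setIntegral_mono_set hI
    · filter_upwards [ae_restrict_mem measurableSet_Ioi] with w hw
      have : (0:ℝ) < w := hw
      simp only [Pi.zero_apply]
      positivity
    · exact hsub.eventuallyLE

lemma sq_eq (α c t τ : ℝ) (h : τ ∈ Ioo 0 t) :
    ((t - τ) ^ (-(α / 2 + 1)) * τ ^ (α / 2) * Real.exp (-c * wv t τ)) ^ 2 =
      t ^ α * (|((t - τ) ^ 2)⁻¹| • ((wv t τ) ^ α * Real.exp (-(2 * c) * wv t τ))) := by
  have h1 := h.1
  have h3 : 0 < t - τ := by have := h.2; linarith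
  have ht : 0 < t := by linarith
  have hw := wv_pos h
  have e1 : Real.exp (-(2 * c) * wv t τ) = Real.exp (-c * wv t τ) ^ 2 := by
    rw [← Real.exp_nat_mul]; congr 1; push_cast; ring
  have e2 : t ^ α * wv t τ ^ α = τ ^ α / (t - τ) ^ α := by
    rw [← Real.mul_rpow ht.le hw.le, wv_eq h, Real.div_rpow h1.le h3.le]
  have e3 : (τ ^ (α / 2)) ^ 2 = τ ^ α := by
    rw [← Real.rpow_natCast, ← Real.rpow_mul h1.le]; congr 1; push_cast; ring
  have e4 : ((t - τ) ^ (-(α / 2 + 1))) ^ 2 = ((t - τ) ^ α)⁻¹ * ((t - τ) ^ 2)⁻¹ := by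
    rw [← Real.rpow_natCast, ← Real.rpow_mul h3.le, ← Real.rpow_natCast (t - τ) 2,
      ← Real.rpow_neg h3.le, ← Real.rpow_neg h3.le, ← Real.rpow_add h3]
    congr 1; push_cast; ring
  rw [mul_pow, mul_pow, e4, e3, e1, abs_of_pos (by positivity), smul_eq_mul]
  calc _ = ((t - τ) ^ 2)⁻¹ * (τ ^ α / (t - τ) ^ α) * Real.exp (-c * wv t τ) ^ 2 := by
        rw [div_eq_mul_inv]; ring
    _ = _ := by rw [← e2]; ring

lemma L1 (α t c : ℝ) (hα : 0 < α) (hc : 0 < c) (ht : 0 < t)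
    (g : ℝ → ℂ) (hg : Measurable g)
    (hint : IntegrableOn (fun τ => ‖g τ‖ ^ 2 * τ ^ α) (Set.Ioo 0 t)) :
    IntegrableOn (fun τ => ((t - τ) ^ (-(α / 2 + 1)) * ‖g τ‖ * τ ^ α) * Real.exp (-c * wv t τ))
      (Ioo 0 t) ∧
    ∫ τ in Ioo 0 t, ((t - τ) ^ (-(α / 2 + 1)) * ‖g τ‖ * τ ^ α) * Real.exp (-c * wv t τ) ≤
      √(t ^ α * ∫ w in Ioi 0, w ^ α * Real.exp (-(2 * c) * w)) *
        √(∫ τ in Ioo 0 t, ‖g τ‖ ^ 2 * τ ^ α) := by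
  set f : ℝ → ℝ := fun τ => (t - τ) ^ (-(α / 2 + 1)) * τ ^ (α / 2) * Real.exp (-c * wv t τ) with hf
  set h : ℝ → ℝ := fun τ => ‖g τ‖ * τ ^ (α / 2) with hh
  have hwm := wv_meas t
  have hfm : Measurable f := by fun_prop
  have hhm : Measurable h := by fun_prop
  have hhsq : ∀ τ ∈ Ioo 0 t, h τ ^ 2 = ‖g τ‖ ^ 2 * τ ^ α := by
    intro τ hτ
    simp only [hh]
    rw [mul_pow, ← Real.rpow_natCast (τ ^ (α / 2)), ← Real.rpow_mul hτ.1.le]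
    congr 2; push_cast; ring
  have hfsq : ∀ τ ∈ Ioo 0 t, f τ ^ 2 = _ := fun τ hτ => sq_eq α c t τ hτ
  obtain ⟨c1, c2⟩ := cov α (2 * c) t hα (by positivity)
  have hf2 : MemLp f 2 (volume.restrict (Ioo 0 t)) := by
    rw [memLp_two_iff_integrable_sq hfm.aestronglyMeasurable]
    exact (integrableOn_congr_fun hfsq measurableSet_Ioo).2 (Integrable.const_mul c1 _)
  have hh2 : MemLp h 2 (volume.restrict (Ioo 0 t)) := by
    rw [memLp_two_iff_integrable_sq hhm.aestronglyMeasurable]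
    exact (integrableOn_congr_fun hhsq measurableSet_Ioo).2 hint
  have heq : ∀ τ ∈ Ioo 0 t, ((t - τ) ^ (-(α / 2 + 1)) * ‖g τ‖ * τ ^ α) * Real.exp (-c * wv t τ)
      = f τ * h τ := by
    intro τ hτ
    have : τ ^ α = τ ^ (α / 2) * τ ^ (α / 2) := by
      rw [← Real.rpow_add hτ.1]; congr 1; ring
    simp only [hf, hh, this]; ring
  constructor
  · refine (integrableOn_congr_fun heq measurableSet_Ioo).2 ?_
    exact hf2.integrable_mul hh2
  · rw [setIntegral_congr_fun measurableSet_Ioo heq]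
    have key := integral_mul_le_Lp_mul_Lq_of_nonneg (p := 2) (q := 2)
      (μ := volume.restrict (Ioo 0 t)) (f := f) (g := h) Real.HolderConjugate.two_two ?_ ?_
      (by simpa using hf2) (by simpa using hh2)
    · refine key.trans ?_
      simp only [Real.rpow_two, ← Real.sqrt_eq_rpow]
      rw [setIntegral_congr_fun measurableSet_Ioo hhsq, setIntegral_congr_fun measurableSet_Ioo hfsq,
        integral_const_mul]
      gcongr
    · filter_upwards [ae_restrict_mem measurableSet_Ioo] with τ hτ
      have h1 := hτ.1
      have h3 : 0 < t - τ := by have := hτ.2; linarith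
      simp only [hf, Pi.zero_apply]; positivity
    · filter_upwards [ae_restrict_mem measurableSet_Ioo] with τ hτ
      have h1 := hτ.1
      simp only [hh, Pi.zero_apply]; positivity

/-- Laplace-type transform -/
noncomputable def Gc (α t : ℝ) (g : ℝ → ℂ) (y : ℂ) : ℂ :=
  ∫ τ in Ioo (0 : ℝ) t, (((t - τ) ^ (-(α / 2 + 1)) : ℝ) : ℂ) * g τ * ((τ ^ α : ℝ) : ℂ) *
    Complex.exp (-((α ^ 2 / 4 * wv t τ : ℝ) : ℂ) * y)

lemma norm_integrand (α t : ℝ) (g : ℝ → ℂ) (y : ℂ) (τ : ℝ) (hτ : τ ∈ Ioo 0 t) :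
    ‖(((t - τ) ^ (-(α / 2 + 1)) : ℝ) : ℂ) * g τ * ((τ ^ α : ℝ) : ℂ) *
      Complex.exp (-((α ^ 2 / 4 * wv t τ : ℝ) : ℂ) * y)‖ =
    ((t - τ) ^ (-(α / 2 + 1)) * ‖g τ‖ * τ ^ α) * Real.exp (-(α ^ 2 / 4 * y.re) * wv t τ) := by
  have h1 := hτ.1
  have h3 : 0 < t - τ := by have := hτ.2; linarith
  rw [norm_mul, norm_mul, norm_mul, Complex.norm_exp, Complex.norm_real, Complex.norm_real,
    Real.norm_of_nonneg (by positivity), Real.norm_of_nonneg (by positivity)]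
  congr 2
  rw [← Complex.ofReal_neg, Complex.re_ofReal_mul]; ring

lemma Gc_bound (α t δ : ℝ) (hα : 0 < α) (hδ : 0 < δ) (ht : 0 < t)
    (g : ℝ → ℂ) (hg : Measurable g)
    (hint : IntegrableOn (fun τ => ‖g τ‖ ^ 2 * τ ^ α) (Set.Ioo 0 t)) (y : ℂ) (hy : δ ≤ y.re) :
    ‖Gc α t g y‖ ≤ √(t ^ α * ∫ w in Ioi 0, w ^ α * Real.exp (-(2 * (α ^ 2 / 4 * δ)) * w)) *
        √(∫ τ in Ioo 0 t, ‖g τ‖ ^ 2 * τ ^ α) := by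
  obtain ⟨a1, a2⟩ := L1 α t (α ^ 2 / 4 * δ) hα (by positivity) ht g hg hint
  refine le_trans ?_ a2
  apply norm_integral_le_of_norm_le a1
  filter_upwards [ae_restrict_mem measurableSet_Ioo] with τ hτ
  rw [norm_integrand α t g y τ hτ]
  have h1 := hτ.1
  have h3 : 0 < t - τ := by have := hτ.2; linarith
  have hw := wv_pos hτ
  gcongr

lemma Gc_diff (α t : ℝ) (hα : 0 < α) (ht : 0 < t)
    (g : ℝ → ℂ) (hg : Measurable g)
    (hint : IntegrableOn (fun τ => ‖g τ‖ ^ 2 * τ ^ α) (Set.Ioo 0 t)) (y : ℂ) (hy : 0 < y.re) :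
    DifferentiableAt ℂ (Gc α t g) y := by
  set d : ℝ := y.re / 2 with hd
  have hdp : 0 < d := by positivity
  set c : ℝ := α ^ 2 / 4 * d with hc
  have hcp : 0 < c := by positivity
  have hwm := wv_meas t
  obtain ⟨a1, -⟩ := L1 α t (c / 2) hα (by positivity) ht g hg hint
  have hs : {z : ℂ | d < z.re} ∈ nhds y :=
    (isOpen_lt continuous_const Complex.continuous_re).mem_nhds (by simp [hd]; linarith)
  have hF : ∀ z : ℂ, Measurable (fun τ : ℝ => (((t - τ) ^ (-(α / 2 + 1)) : ℝ) : ℂ) * g τ *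
      ((τ ^ α : ℝ) : ℂ) * Complex.exp (-((α ^ 2 / 4 * wv t τ : ℝ) : ℂ) * z)) := by
    intro z
    fun_prop
  refine (hasDerivAt_integral_of_dominated_loc_of_deriv_le (𝕜 := ℂ)
    (μ := volume.restrict (Ioo 0 t)) (x₀ := y) (s := {z : ℂ | d < z.re})
    (F := fun z τ => (((t - τ) ^ (-(α / 2 + 1)) : ℝ) : ℂ) * g τ * ((τ ^ α : ℝ) : ℂ) *
      Complex.exp (-((α ^ 2 / 4 * wv t τ : ℝ) : ℂ) * z))
    (F' := fun z τ => (((t - τ) ^ (-(α / 2 + 1)) : ℝ) : ℂ) * g τ * ((τ ^ α : ℝ) : ℂ) *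
      Complex.exp (-((α ^ 2 / 4 * wv t τ : ℝ) : ℂ) * z) * (-((α ^ 2 / 4 * wv t τ : ℝ) : ℂ)))
    (bound := fun τ => (α ^ 2 / 4 * (2 / c)) * (((t - τ) ^ (-(α / 2 + 1)) * ‖g τ‖ * τ ^ α) *
      Real.exp (-(c / 2) * wv t τ))) hs ?_ ?_ ?_ ?_ ?_ ?_).2.differentiableAt
  · exact Eventually.of_forall fun z => (hF z).aestronglyMeasurable
  · refine Integrable.mono' a1 (hF y).aestronglyMeasurable ?_
    filter_upwards [ae_restrict_mem measurableSet_Ioo] with τ hτ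
    rw [norm_integrand α t g y τ hτ]
    have h1 := hτ.1
    have h3 : 0 < t - τ := by have := hτ.2; linarith
    have hw := wv_pos hτ
    have : c / 2 ≤ α ^ 2 / 4 * y.re := by
      have : 0 < α ^ 2 / 4 := by positivity
      rw [hc, hd]; nlinarith
    gcongr
  · exact ((hF y).mul (by fun_prop)).aestronglyMeasurable
  · filter_upwards [ae_restrict_mem measurableSet_Ioo] with τ hτ z hz
    have hz' : d < z.re := hz
    rw [norm_mul, norm_integrand α t g z τ hτ, norm_neg, Complex.norm_real]
    have h1 := hτ.1
    have h3 : 0 < t - τ := by have := hτ.2; linarith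
    have hw := wv_pos hτ
    rw [Real.norm_of_nonneg (by positivity)]
    have e1 : Real.exp (-(α ^ 2 / 4 * z.re) * wv t τ) ≤ Real.exp (-c * wv t τ) := by
      rw [hc]; gcongr
    have e2 : wv t τ ≤ 2 / c * Real.exp (c / 2 * wv t τ) := by
      have := Real.add_one_le_exp (c / 2 * wv t τ)
      have h5 : wv t τ = 2 / c * (c / 2 * wv t τ) := by field_simp
      calc wv t τ = 2 / c * (c / 2 * wv t τ) := h5
        _ ≤ _ := by gcongr; linarith
    have e3 : Real.exp (-c * wv t τ) * Real.exp (c / 2 * wv t τ) =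
        Real.exp (-(c / 2) * wv t τ) := by
      rw [← Real.exp_add]; congr 1; ring
    calc _ ≤ ((t - τ) ^ (-(α / 2 + 1)) * ‖g τ‖ * τ ^ α) * Real.exp (-c * wv t τ) *
          (α ^ 2 / 4 * (2 / c * Real.exp (c / 2 * wv t τ))) := by gcongr
      _ = _ := by rw [← e3]; ring
  · exact Integrable.const_mul a1 _
  · refine Eventually.of_forall fun τ z _ => ?_
    have := (((hasDerivAt_id z).const_mul (-((α ^ 2 / 4 * wv t τ : ℝ) : ℂ))).cexp).const_mul
      ((((t - τ) ^ (-(α / 2 + 1)) : ℝ) : ℂ) * g τ * ((τ ^ α : ℝ) : ℂ))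
    refine HasDerivAt.congr_deriv this ?_
    simp only [id, mul_one, mul_assoc]

/-- complex extension -/
noncomputable def Hc (α t : ℝ) (g : ℝ → ℂ) (z : ℂ) : ℂ :=
  ((t ^ (-α) * (α ^ α / (2 ^ α * Real.Gamma (α / 2))) : ℝ) : ℂ) *
    (z * z ^ ((-((α - 1) * (α + 2) / (2 * α)) : ℝ) : ℂ)) * Gc α t g (z ^ ((2 / α : ℝ) : ℂ))

lemma Hc_real (α t : ℝ) (hα : 0 < α) (ht : 0 < t) (g : ℝ → ℂ) (x : ℝ) (hx : 0 < x) :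
    Lt α t g x * ((x ^ (-((α - 1) * (α + 2) / (2 * α))) : ℝ) : ℂ) *
              ((Real.exp (α ^ 2 / (4 * t) * x ^ (2 / α)) : ℝ) : ℂ) = Hc α t g (x : ℂ) := by
  have key : (∫ τ in Set.Ioo (0 : ℝ) t, (Kker α x (t - τ) : ℂ) * g τ * ((τ ^ α : ℝ) : ℂ)) *
      ((Real.exp (α ^ 2 / (4 * t) * x ^ (2 / α)) : ℝ) : ℂ) =
      ((α ^ α / (2 ^ α * Real.Gamma (α / 2)) : ℝ) : ℂ) * x *
        Gc α t g (((x ^ (2 / α) : ℝ)) : ℂ) := by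
    unfold Gc
    rw [← integral_mul_const, ← integral_const_mul]
    refine setIntegral_congr_fun measurableSet_Ioo fun τ hτ => ?_
    have h1 := hτ.1
    have h3 : 0 < t - τ := by have := hτ.2; linarith
    have e : Real.exp (-(α ^ 2) * x ^ (2 / α) / (4 * (t - τ))) *
        Real.exp (α ^ 2 / (4 * t) * x ^ (2 / α)) =
        Real.exp (-(α ^ 2 / 4 * wv t τ) * x ^ (2 / α)) := by
      rw [← Real.exp_add]; congr 1
      unfold wv; field_simp; ring
    have e' : Complex.exp (-((α ^ 2 / 4 * wv t τ : ℝ) : ℂ) * ((x ^ (2 / α) : ℝ) : ℂ)) =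
        ((Real.exp (-(α ^ 2) * x ^ (2 / α) / (4 * (t - τ))) : ℝ) : ℂ) *
        ((Real.exp (α ^ 2 / (4 * t) * x ^ (2 / α)) : ℝ) : ℂ) := by
      rw [← Complex.ofReal_mul, e, Complex.ofReal_exp]
      push_cast
      rfl
    rw [e', Kker]
    simp only [Complex.ofReal_mul]
    ring
  unfold Lt Hc
  rw [← Complex.ofReal_cpow hx.le, ← Complex.ofReal_cpow hx.le, Complex.ofReal_mul]
  linear_combination ((t ^ (-α) : ℝ) : ℂ) *
    ((x ^ (-((α - 1) * (α + 2) / (2 * α))) : ℝ) : ℂ) * key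

lemma iter_real (f : ℂ → ℂ) (U : Set ℂ) (hU : IsOpen U) (hf : DifferentiableOn ℂ f U) (n : ℕ) :
    ∀ x : ℝ, (x : ℂ) ∈ U → iteratedDeriv n (fun x : ℝ => f x) x = iteratedDeriv n f x := by
  induction n with
  | zero => intro x hx; simp
  | succ n ih =>
    intro x hx
    rw [iteratedDeriv_succ, iteratedDeriv_succ]
    have h1 : (iteratedDeriv n (fun x : ℝ => f x)) =ᶠ[nhds x]
        fun x : ℝ => iteratedDeriv n f (x : ℂ) := by
      filter_upwards [(hU.preimage Complex.continuous_ofReal).mem_nhds hx] with y hy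
      exact ih y hy
    rw [h1.deriv_eq]
    have h2 : DifferentiableAt ℂ (iteratedDeriv n f) x := by
      rw [iteratedDeriv_eq_iterate]
      exact ((hf.analyticAt (hU.mem_nhds hx)).iterated_deriv n).differentiableAt
    exact h2.hasDerivAt.comp_ofReal.deriv

lemma nbhd (α ξ : ℝ) (hα : 0 < α) (hξ : 0 < ξ) : ∃ r > 0, ∃ δ > 0, ∃ M > 0,
    ∀ z ∈ Metric.closedBall (ξ : ℂ) r, z ∈ Complex.slitPlane ∧ δ ≤ (z ^ ((2 / α : ℝ) : ℂ)).re ∧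
      ‖z * z ^ ((-((α - 1) * (α + 2) / (2 * α)) : ℝ) : ℂ)‖ ≤ M := by
  have hs : (ξ : ℂ) ∈ Complex.slitPlane := by simp [Complex.slitPlane, hξ]
  have c1 : ContinuousAt (fun z : ℂ => (z ^ ((2 / α : ℝ) : ℂ)).re) ξ :=
    Complex.continuous_re.continuousAt.comp (f := fun z : ℂ => z ^ ((2 / α : ℝ) : ℂ)) (DifferentiableAt.cpow_const (f := fun z : ℂ => z) differentiableAt_id hs).continuousAt
  have c2 : ContinuousAt (fun z : ℂ => ‖z * z ^ ((-((α - 1) * (α + 2) / (2 * α)) : ℝ) : ℂ)‖) ξ :=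
    (continuousAt_id.mul (DifferentiableAt.cpow_const (f := fun z : ℂ => z) differentiableAt_id hs).continuousAt).norm
  have hp : 0 < (((ξ : ℂ) ^ ((2 / α : ℝ) : ℂ)).re) := by
    rw [← Complex.ofReal_cpow hξ.le, Complex.ofReal_re]; positivity
  set p := (((ξ : ℂ) ^ ((2 / α : ℝ) : ℂ)).re)
  set m := ‖(ξ : ℂ) * (ξ : ℂ) ^ ((-((α - 1) * (α + 2) / (2 * α)) : ℝ) : ℂ)‖
  have hm : 0 ≤ m := norm_nonneg _
  have e1 := c1.eventually (lt_mem_nhds (show p / 2 < p by linarith))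
  have e2 := c2.eventually (gt_mem_nhds (show m < m + 1 by linarith))
  have e3 := Complex.isOpen_slitPlane.mem_nhds hs
  obtain ⟨r, hr, h⟩ := Metric.nhds_basis_closedBall.eventually_iff.1 (e1.and (e2.and e3))
  refine ⟨r, hr, p / 2, by positivity, m + 1, by positivity, fun z hz => ?_⟩
  obtain ⟨h1, h2, h3⟩ := h hz
  exact ⟨h3, h1.le, h2.le⟩

lemma tendI (f : ℝ → ℝ) (T : ℝ) (hT : 0 < T) (hint : IntegrableOn f (Ioo 0 T)) :
    Tendsto (fun t => ∫ τ in Ioo 0 t, f τ) (nhdsWithin 0 (Ioo 0 T)) (nhds 0) := by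
  have hc := intervalIntegral.continuousOn_primitive (f := f) (a := 0) (b := T) (μ := volume)
    ((integrableOn_Icc_iff_integrableOn_Ioo).2 hint)
  have := (hc 0 (by simp [hT.le])).mono Ioo_subset_Icc_self
  simpa [ContinuousWithinAt, integral_Ioc_eq_integral_Ioo] using this

theorem stmt18 (α T : ℝ) (hα : 0 < α) (hα2 : α ≤ 2) (hT : 0 < T) (j : ℕ)
    (g : ℝ → ℂ) (hg : Measurable g)
    (hint : IntegrableOn (fun τ => ‖g τ‖ ^ 2 * τ ^ α) (Set.Ioo 0 T))
    (ξ : ℝ) (hξ : 0 < ξ) :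
    Tendsto (fun t : ℝ => t ^ α *
        ‖iteratedDeriv j (fun x : ℝ =>
            Lt α t g x * ((x ^ (-((α - 1) * (α + 2) / (2 * α))) : ℝ) : ℂ) *
              ((Real.exp (α ^ 2 / (4 * t) * x ^ (2 / α)) : ℝ) : ℂ)) ξ‖ ^ 2)
      (nhdsWithin 0 (Set.Ioo 0 T)) (nhds 0) := by
  obtain ⟨r, hr, δ, hδ, M, hM, hnb⟩ := nbhd α ξ hα hξ
  set C : ℝ := ∫ w in Ioi 0, w ^ α * Real.exp (-(2 * (α ^ 2 / 4 * δ)) * w) with hC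
  have hC0 : 0 ≤ C := by
    apply setIntegral_nonneg measurableSet_Ioi
    intro w hw
    have : (0:ℝ) < w := hw
    positivity
  set I : ℝ → ℝ := fun t => ∫ τ in Ioo 0 t, ‖g τ‖ ^ 2 * τ ^ α with hI
  have hI0 : ∀ t, 0 ≤ I t := by
    intro t
    apply setIntegral_nonneg measurableSet_Ioo
    intro w hw
    have : (0:ℝ) < w := hw.1
    positivity
  set k : ℝ := α ^ α / (2 ^ α * Real.Gamma (α / 2)) with hk
  have hk0 : 0 ≤ k := by
    have := Real.Gamma_pos_of_pos (show 0 < α / 2 by positivity)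
    positivity
  set D : ℝ := (j.factorial * (k * M) / r ^ j) ^ 2 * C with hD
  have hlim : Tendsto (fun t => D * I t) (nhdsWithin 0 (Ioo 0 T)) (nhds 0) := by
    simpa using (tendI _ T hT hint).const_mul D
  have hmem : ∀ᶠ t in nhdsWithin (0:ℝ) (Ioo 0 T), t ∈ Ioo 0 T := self_mem_nhdsWithin
  refine tendsto_of_tendsto_of_tendsto_of_le_of_le' tendsto_const_nhds hlim ?_ ?_
  · filter_upwards [hmem] with t ht
    have := ht.1
    positivity
  · filter_upwards [hmem] with t ht
    have ht0 := ht.1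
    have hint' := hint.mono_set (Ioo_subset_Ioo_right ht.2.le : Ioo 0 t ⊆ Ioo 0 T)
    have hdiff : ∀ z ∈ Metric.closedBall (ξ : ℂ) r, DifferentiableAt ℂ (Hc α t g) z := by
      intro z hz
      obtain ⟨h1, h2, h3⟩ := hnb z hz
      have d1 : DifferentiableAt ℂ (fun z : ℂ => z ^ ((2 / α : ℝ) : ℂ)) z :=
        differentiableAt_id.cpow_const h1
      have d2 : DifferentiableAt ℂ
          (fun z : ℂ => z ^ ((-((α - 1) * (α + 2) / (2 * α)) : ℝ) : ℂ)) z :=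
        differentiableAt_id.cpow_const h1
      have d3 := Gc_diff α t hα ht0 g hg hint' (z ^ ((2 / α : ℝ) : ℂ)) (by linarith)
      have d4 : DifferentiableAt ℂ (fun z : ℂ => Gc α t g (z ^ ((2 / α : ℝ) : ℂ))) z :=
        DifferentiableAt.comp (g := Gc α t g) z d3 d1
      exact ((differentiableAt_id.mul d2).const_mul _).mul d4
    have hbd : ∀ z ∈ Metric.closedBall (ξ : ℂ) r,
        ‖Hc α t g z‖ ≤ t ^ (-α) * k * M * (√(t ^ α * C) * √(I t)) := by
      intro z hz
      obtain ⟨h1, h2, h3⟩ := hnb z hz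
      have b := Gc_bound α t δ hα hδ ht0 g hg hint' _ h2
      unfold Hc
      rw [norm_mul, norm_mul, Complex.norm_real, Real.norm_of_nonneg (by positivity)]
      gcongr
    have hder : iteratedDeriv j (fun x : ℝ =>
            Lt α t g x * ((x ^ (-((α - 1) * (α + 2) / (2 * α))) : ℝ) : ℂ) *
              ((Real.exp (α ^ 2 / (4 * t) * x ^ (2 / α)) : ℝ) : ℂ)) ξ =
        iteratedDeriv j (Hc α t g) (ξ : ℂ) := by
      rw [← iter_real (Hc α t g) (Metric.ball (ξ : ℂ) r) Metric.isOpen_ball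
        (fun z hz => (hdiff z (Metric.ball_subset_closedBall hz)).differentiableWithinAt) j ξ
        (Metric.mem_ball_self hr)]
      apply Filter.EventuallyEq.iteratedDeriv_eq
      filter_upwards [lt_mem_nhds hξ] with x hx
      exact Hc_real α t hα ht0 g x hx
    rw [hder]
    have hcau := Complex.norm_iteratedDeriv_le_of_forall_mem_sphere_norm_le (f := Hc α t g)
      (c := (ξ : ℂ)) (R := r) j hr
      (DifferentiableOn.diffContOnCl_ball (U := Metric.closedBall (ξ : ℂ) r)
        (fun z hz => (hdiff z hz).differentiableWithinAt) Subset.rfl)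
      (fun z hz => hbd z (Metric.sphere_subset_closedBall hz))
    have hP : 0 < t ^ α := by positivity
    calc t ^ α * ‖iteratedDeriv j (Hc α t g) (ξ : ℂ)‖ ^ 2
        ≤ t ^ α * (j.factorial * (t ^ (-α) * k * M * (√(t ^ α * C) * √(I t))) / r ^ j) ^ 2 := by
          gcongr
      _ = t ^ α * (j.factorial * (k * M) / r ^ j) ^ 2 * (t ^ (-α)) ^ 2 *
            (√(t ^ α * C) ^ 2 * √(I t) ^ 2) := by ring
      _ = D * I t := by
          rw [Real.sq_sqrt (by positivity), Real.sq_sqrt (hI0 t), Real.rpow_neg ht0.le, hD]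
          field_simp
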